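/- Let T = Trian(A, M, B) be a triangular algebra over R in which A and B have only trivial idempotents, let σ be an automorphism of T given in standard form with data (f, g, m₀, ν), and let D be a generalized σ-derivation of T with associated σ-derivation d. Then there exist: an f-derivation d_A of A (d_A(aa') = d_A(a)a' + f(a)d_A(a')), a g-derivation d_B of B (d_B(bb') = d_B(b)b' + g(b)d_B(b')), an R-linear map ξ : M → M with ξ(a·m) = d_A(a)·m + f(a)·ξ(m) and ξ(m·b) = ξ(m)·b + ν(m)·d_B(b) for all a, m, b; elements m_d, m_D ∈ M; a generalized f-derivation D_A of A with associated f-derivation d_A (D_A(aa') = D_A(a)a' + f(a)d_A(a')); and a generalized g-derivation D_B of B with associated g-derivation d_B (D_B(bb') = D_B(b)b' + g(b)d_B(b')), such that D(a, m, b) = (D_A(a), f(a)·m_d + m_D·b − m₀·d_B(b) + ξ(m) + D_A(1_A)·m, D_B(b)) for all (a, m, b) ∈ T. -/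

import Mathlib

/-!
Triangular algebras `Trian(A, M, B)` realized on the type `A × M × B`, where `A`, `B` are
unital associative `R`-algebras and `M` is an `(A, B)`-bimodule (a left `A`-module and a
right `B`-module, the right action being encoded as a left `Bᵐᵒᵖ`-action, written
`op b • m`, with the two actions commuting), compatible with the `R`-module structure.
-/

open MulOpposite

variable {R A B M : Type*} [CommRing R] [Ring A] [Ring B]
  [Algebra R A] [Algebra R B]
  [AddCommGroup M] [Module R M]
  [Module A M] [Module Bᵐᵒᵖ M]
  [SMulCommClass A Bᵐᵒᵖ M]
  [IsScalarTower R A M] [SMulCommClass R A M]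
  [IsScalarTower R Bᵐᵒᵖ M] [SMulCommClass R Bᵐᵒᵖ M]

/-- Multiplication of the triangular algebra `Trian(A, M, B)`:
`(a, m, b) * (a', m', b') = (a * a', a • m' + m • b', b * b')`, where the right action of
`B` on `M` is written `op b • m`. -/
instance triMul : Mul (A × M × B) :=
  ⟨fun x y => (x.1 * y.1, x.1 • y.2.1 + op y.2.2 • x.2.1, x.2.2 * y.2.2)⟩

theorem tri_mul_def (x y : A × M × B) :
    x * y = (x.1 * y.1, x.1 • y.2.1 + op y.2.2 • x.2.1, x.2.2 * y.2.2) := rfl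

instance triOne : One (A × M × B) := ⟨(1, 0, 1)⟩

theorem tri_one_def : (1 : A × M × B) = (1, 0, 1) := rfl

/-- The triangular algebra `Trian(A, M, B)` as a ring structure on `A × M × B`. -/
instance triRing : Ring (A × M × B) where
  __ := (inferInstance : AddCommGroup (A × M × B))
  __ := triMul
  __ := triOne
  left_distrib x y z := by
    refine Prod.ext ?_ (Prod.ext ?_ ?_) <;>
      simp [tri_mul_def, mul_add, smul_add, add_smul, Prod.fst_add, Prod.snd_add] <;> abel
  right_distrib x y z := by
    refine Prod.ext ?_ (Prod.ext ?_ ?_) <;>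
      simp [tri_mul_def, add_mul, smul_add, add_smul, Prod.fst_add, Prod.snd_add] <;> abel
  zero_mul x := by
    refine Prod.ext ?_ (Prod.ext ?_ ?_) <;> simp [tri_mul_def]
  mul_zero x := by
    refine Prod.ext ?_ (Prod.ext ?_ ?_) <;> simp [tri_mul_def]
  mul_assoc x y z := by
    refine Prod.ext (mul_assoc _ _ _) (Prod.ext ?_ (mul_assoc _ _ _))
    show (x.1 * y.1) • z.2.1 + op z.2.2 • (x.1 • y.2.1 + op y.2.2 • x.2.1)
        = x.1 • (y.1 • z.2.1 + op z.2.2 • y.2.1) + op (y.2.2 * z.2.2) • x.2.1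
    rw [mul_smul, smul_add, smul_add, op_mul, mul_smul, smul_comm x.1 (op z.2.2)]
    abel
  one_mul x := by
    refine Prod.ext (one_mul _) (Prod.ext ?_ (one_mul _))
    show (1 : A) • x.2.1 + op x.2.2 • (0 : M) = x.2.1
    simp
  mul_one x := by
    refine Prod.ext (mul_one _) (Prod.ext ?_ (mul_one _))
    show x.1 • (0 : M) + op (1 : B) • x.2.1 = x.2.1
    simp

/-- The triangular algebra `Trian(A, M, B)` as an `R`-algebra. -/
instance triAlgebra : Algebra R (A × M × B) :=
  Algebra.ofModule
    (fun r x y => by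
      refine Prod.ext ?_ (Prod.ext ?_ ?_)
      · exact smul_mul_assoc r x.1 y.1
      · show (r • x.1) • y.2.1 + op y.2.2 • (r • x.2.1) = r • (x.1 • y.2.1 + op y.2.2 • x.2.1)
        rw [smul_assoc, smul_add, smul_comm (op y.2.2) r]
      · exact smul_mul_assoc r x.2.2 y.2.2)
    (fun r x y => by
      refine Prod.ext ?_ (Prod.ext ?_ ?_)
      · exact mul_smul_comm r x.1 y.1
      · show x.1 • (r • y.2.1) + op (r • y.2.2) • x.2.1 = r • (x.1 • y.2.1 + op y.2.2 • x.2.1)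
        rw [op_smul, smul_assoc, smul_add, smul_comm x.1 r]
      · exact mul_smul_comm r x.2.2 y.2.2)

/-!
Decompose `(a, m, b) = (a, 0, 0) + (0, m, 0) + (0, 0, b)` and expand the twisted Leibniz rule on
products of elements of the three blocks. The identities `(a, 0, 0) * (1, 0, 0) = (a, 0, 0)`,
`(1, 0, 0) * (0, m, 0) = (0, m, 0) = (0, m, 0) * (0, 0, 1)` and
`(0, 0, 1) * (0, 0, b) = (0, 0, b)` determine `D` on each block, up to the diagonal entries; the
remaining products of two blocks give the Leibniz rules for these entries.
-/

/-- `D` is a generalized `σ`-derivation with associated map `d`. In particular, `d` is a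
`σ`-derivation when `IsGeneralizedSkewDerivation σ d d` holds. -/
def IsGeneralizedSkewDerivation {S : Type*} [NonUnitalNonAssocSemiring S] (σ D d : S → S) : Prop :=
  ∀ x y, D (x * y) = D x * y + σ x * d y

/-- The map `σ` of `Trian(A, M, B)` is in standard form with data `(f, g, m₀, ν)`. Only
the formula for `σ` is recorded: `f`, `g` and `ν` are arbitrary maps here. -/
def IsStandardForm (σ : A × M × B → A × M × B) (f : A → A) (g : B → B) (m₀ : M) (ν : M → M) :
    Prop :=
  ∀ a m b, σ (a, m, b) = (f a, f a • m₀ - op (g b) • m₀ + ν m, g b)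

section StandardForm

variable {σ D d : A × M × B → A × M × B} {f : A →+* A} {g : B →+* B} {m₀ : M} {ν : M →+ M}

namespace IsStandardForm

variable (hσ : IsStandardForm σ f g m₀ ν)
include hσ
omit [SMulCommClass A Bᵐᵒᵖ M]

theorem apply_left (a : A) : σ (a, 0, 0) = (f a, f a • m₀, 0) := by
  simp [hσ a 0 0]

theorem apply_middle (m : M) : σ (0, m, 0) = (0, ν m, 0) := by
  simp [hσ 0 m 0]

theorem apply_right (b : B) : σ (0, 0, b) = (0, -(op (g b) • m₀), g b) := by
  simp [hσ 0 0 b]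

end IsStandardForm

namespace IsGeneralizedSkewDerivation

variable (hσ : IsStandardForm σ f g m₀ ν) (hD : IsGeneralizedSkewDerivation σ D d)
include hσ hD

theorem left_corner :
    IsGeneralizedSkewDerivation f (fun a ↦ (D (a, 0, 0)).1) (fun a ↦ (d (a, 0, 0)).1) := by
  intro a a'
  simpa [tri_mul_def, hσ.apply_left] using congrArg (·.1) (hD (a, 0, 0) (a', 0, 0))

theorem right_corner :
    IsGeneralizedSkewDerivation g (fun b ↦ (D (0, 0, b)).2.2) (fun b ↦ (d (0, 0, b)).2.2) := by
  intro b b'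
  simpa [tri_mul_def, hσ.apply_right] using congrArg (·.2.2) (hD (0, 0, b) (0, 0, b'))

theorem apply_left_snd_snd (a : A) : (D (a, 0, 0)).2.2 = 0 := by
  simpa [tri_mul_def, hσ.apply_left] using congrArg (·.2.2) (hD (a, 0, 0) (1, 0, 0))

theorem apply_middle_fst (m : M) : (D (0, m, 0)).1 = 0 := by
  simpa [tri_mul_def, hσ.apply_middle] using congrArg (·.1) (hD (0, m, 0) (0, 0, 1))

theorem apply_middle_snd_snd (m : M) : (D (0, m, 0)).2.2 = 0 := by
  simpa [tri_mul_def, hσ.apply_left] using congrArg (·.2.2) (hD (1, 0, 0) (0, m, 0))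

theorem apply_middle_op_smul (m : M) (b : B) :
    (D (0, op b • m, 0)).2.1 = op b • (D (0, m, 0)).2.1 + op (d (0, 0, b)).2.2 • ν m := by
  simpa [tri_mul_def, hσ.apply_middle] using congrArg (·.2.1) (hD (0, m, 0) (0, 0, b))

theorem apply_right (b : B) :
    D (0, 0, b) =
      (0, op b • (D (0, 0, 1)).2.1 - op (d (0, 0, b)).2.2 • m₀, (D (0, 0, b)).2.2) := by
  have h := hD (0, 0, 1) (0, 0, b)
  simp only [tri_mul_def, hσ.apply_right, Prod.ext_iff, Prod.fst_add, Prod.snd_add] at h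
  refine Prod.ext ?_ (Prod.ext ?_ rfl)
  · simpa using h.1
  · simpa [sub_eq_add_neg] using h.2.1

variable (hd : IsGeneralizedSkewDerivation σ d d)
include hd

theorem apply_left (a : A) :
    D (a, 0, 0) = ((D (a, 0, 0)).1, f a • (d (1, 0, 0)).2.1, 0) := by
  refine Prod.ext rfl (Prod.ext ?_ (hD.apply_left_snd_snd hσ a))
  simpa [tri_mul_def, hσ.apply_left, hd.apply_left_snd_snd hσ] using
    congrArg (·.2.1) (hD (a, 0, 0) (1, 0, 0))

theorem apply_middle_smul (a : A) (m : M) :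
    (D (0, a • m, 0)).2.1 = (D (a, 0, 0)).1 • m + f a • (d (0, m, 0)).2.1 := by
  simpa [tri_mul_def, hσ.apply_left, hd.apply_middle_snd_snd hσ] using
    congrArg (·.2.1) (hD (a, 0, 0) (0, m, 0))

theorem apply_middle (m : M) :
    D (0, m, 0) = (0, (d (0, m, 0)).2.1 + (D (1, 0, 0)).1 • m, 0) := by
  refine Prod.ext (hD.apply_middle_fst hσ m) (Prod.ext ?_ (hD.apply_middle_snd_snd hσ m))
  simpa [add_comm] using hD.apply_middle_smul hσ hd 1 m

end IsGeneralizedSkewDerivation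

theorem IsGeneralizedSkewDerivation.apply_eq {F : Type*} [FunLike F (A × M × B) (A × M × B)]
    [AddMonoidHomClass F (A × M × B) (A × M × B)] {D : F}
    (hσ : IsStandardForm σ f g m₀ ν) (hd : IsGeneralizedSkewDerivation σ d d)
    (hD : IsGeneralizedSkewDerivation σ D d) (a : A) (m : M) (b : B) :
    D (a, m, b) = ((D (a, 0, 0)).1,
      f a • (d (1, 0, 0)).2.1 + op b • (D (0, 0, 1)).2.1 - op (d (0, 0, b)).2.2 • m₀ +
        (d (0, m, 0)).2.1 + (D (1, 0, 0)).1 • m,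
      (D (0, 0, b)).2.2) := by
  have block_decomposition : (a, m, b) = (a, 0, 0) + (0, m, 0) + (0, 0, b) := by simp
  rw [block_decomposition, map_add, map_add, hD.apply_left hσ hd, hD.apply_middle hσ hd,
    hD.apply_right hσ]
  refine Prod.ext ?_ (Prod.ext ?_ ?_)
  · simp
  · simp only [Prod.fst_add, Prod.snd_add]
    abel
  · simp

end StandardForm

/-- The diagonal entry `A → A` of a linear endomorphism of `Trian(A, M, B)`, viewed as a `3 × 3`
matrix of linear maps. -/
def entryA (D : (A × M × B) →ₗ[R] (A × M × B)) : A →ₗ[R] A :=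
  LinearMap.fst R A (M × B) ∘ₗ D ∘ₗ LinearMap.inl R A (M × B)

/-- The diagonal entry `M → M` of a linear endomorphism of `Trian(A, M, B)`. -/
def entryM (D : (A × M × B) →ₗ[R] (A × M × B)) : M →ₗ[R] M :=
  (LinearMap.fst R M B ∘ₗ LinearMap.snd R A (M × B)) ∘ₗ D ∘ₗ
    LinearMap.inr R A (M × B) ∘ₗ LinearMap.inl R M B

/-- The diagonal entry `B → B` of a linear endomorphism of `Trian(A, M, B)`. -/
def entryB (D : (A × M × B) →ₗ[R] (A × M × B)) : B →ₗ[R] B :=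
  (LinearMap.snd R M B ∘ₗ LinearMap.snd R A (M × B)) ∘ₗ D ∘ₗ
    LinearMap.inr R A (M × B) ∘ₗ LinearMap.inr R M B

omit [IsScalarTower R A M] [SMulCommClass R A M]
  [IsScalarTower R Bᵐᵒᵖ M] [SMulCommClass R Bᵐᵒᵖ M] in
theorem generalized_sigma_derivation_description_general
    (f : A →+* A) (g : B →+* B) (m₀ : M) (ν : M →+ M)
    (σ : A × M × B → A × M × B) (hσ : IsStandardForm σ f g m₀ ν)
    (D d : (A × M × B) →ₗ[R] (A × M × B))
    (hd : IsGeneralizedSkewDerivation σ d d) (hD : IsGeneralizedSkewDerivation σ D d) :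
    ∃ (dA : A →ₗ[R] A) (dB : B →ₗ[R] B) (ξ : M →ₗ[R] M) (m_d m_D : M)
      (DA : A →ₗ[R] A) (DB : B →ₗ[R] B),
      IsGeneralizedSkewDerivation f dA dA ∧
      IsGeneralizedSkewDerivation g dB dB ∧
      (∀ (a : A) (m : M), ξ (a • m) = dA a • m + f a • ξ m) ∧
      (∀ (m : M) (b : B), ξ (op b • m) = op b • ξ m + op (dB b) • ν m) ∧
      IsGeneralizedSkewDerivation f DA dA ∧
      IsGeneralizedSkewDerivation g DB dB ∧
      ∀ (a : A) (m : M) (b : B),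
        D (a, m, b) =
          (DA a, f a • m_d + op b • m_D - op (dB b) • m₀ + ξ m + DA 1 • m, DB b) :=
  ⟨entryA d, entryB d, entryM d, (d (1, 0, 0)).2.1, (D (0, 0, 1)).2.1, entryA D, entryB D,
    hd.left_corner hσ, hd.right_corner hσ, hd.apply_middle_smul hσ hd, hd.apply_middle_op_smul hσ,
    hD.left_corner hσ, hD.right_corner hσ, IsGeneralizedSkewDerivation.apply_eq hσ hd hD⟩

/-- Description of generalized σ-derivations of a triangular algebra whose
corner algebras have only trivial idempotents. -/
theorem generalized_sigma_derivation_description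
    [Nontrivial M] [FaithfulSMul A M] [FaithfulSMul Bᵐᵒᵖ M]
    (hA : ∀ e : A, e * e = e → e = 0 ∨ e = 1)
    (hB : ∀ e : B, e * e = e → e = 0 ∨ e = 1)
    (f : A ≃ₐ[R] A) (g : B ≃ₐ[R] B) (m₀ : M) (ν : M ≃ₗ[R] M)
    (hν₁ : ∀ (a : A) (m : M), ν (a • m) = f a • ν m)
    (hν₂ : ∀ (m : M) (b : B), ν (op b • m) = op (g b) • ν m)
    (σ : (A × M × B) ≃ₐ[R] (A × M × B))
    (hσ : ∀ (a : A) (m : M) (b : B),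
      σ (a, m, b) = (f a, f a • m₀ - op (g b) • m₀ + ν m, g b))
    (D d : (A × M × B) →ₗ[R] (A × M × B))
    (hd : ∀ x y : A × M × B, d (x * y) = d x * y + σ x * d y)
    (hD : ∀ x y : A × M × B, D (x * y) = D x * y + σ x * d y) :
    ∃ (dA : A →ₗ[R] A) (dB : B →ₗ[R] B) (ξ : M →ₗ[R] M) (m_d m_D : M)
      (DA : A →ₗ[R] A) (DB : B →ₗ[R] B),
      -- dA is an f-derivation of A
      (∀ a a' : A, dA (a * a') = dA a * a' + f a * dA a') ∧
      -- dB is a g-derivation of B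
      (∀ b b' : B, dB (b * b') = dB b * b' + g b * dB b') ∧
      -- compatibility properties of ξ
      (∀ (a : A) (m : M), ξ (a • m) = dA a • m + f a • ξ m) ∧
      (∀ (m : M) (b : B), ξ (op b • m) = op b • ξ m + op (dB b) • ν m) ∧
      -- DA is a generalized f-derivation of A with associated f-derivation dA
      (∀ a a' : A, DA (a * a') = DA a * a' + f a * dA a') ∧
      -- DB is a generalized g-derivation of B with associated g-derivation dB
      (∀ b b' : B, DB (b * b') = DB b * b' + g b * dB b') ∧
      -- the form of D
      (∀ (a : A) (m : M) (b : B),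
        D (a, m, b) = (DA a,
          f a • m_d + op b • m_D - op (dB b) • m₀ + ξ m + DA 1 • m,
          DB b)) :=
  generalized_sigma_derivation_description_general (f : A →+* A) (g : B →+* B) m₀
    (ν : M →+ M) σ hσ D d hd hD
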